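/- Let N ≥ 1 and i ∈ {1,…,N} be integers and let μ_1,…,μ_N be real numbers. Then the following two conditions are equivalent: (a) for every λ = (λ_1,…,λ_N) ∈ ℝ^N with λ_k ≥ 0 for all k ∈ {1,…,N}, one has Σ_{j=1}^N μ_j · S_{i−1}(λ̂_j) ≥ 0; (b) for every subset J ⊆ {1,…,N} with |J| = N − i + 1, one has Σ_{j∈J} μ_j ≥ 0. -/

import Mathlib

/-- For `μ : Fin N → ℝ` and `1 ≤ i ≤ N`, the condition
`∀ λ ≥ 0, Σ_j μ_j · S_{i−1}(λ̂_j) ≥ 0` is equivalent to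
`Σ_{j∈J} μ_j ≥ 0` for every `J ⊆ {1,…,N}` with `|J| = N − i + 1`.
Here `S_{i−1}(λ̂_j)` is the `(i−1)`-st elementary symmetric function of the numbers
`λ_1,…,λ_N` with `λ_j` deleted. -/
theorem stmt_0 (N i : ℕ) (hN : 1 ≤ N) (hi : 1 ≤ i) (hiN : i ≤ N) (μ : Fin N → ℝ) :
    (∀ lam : Fin N → ℝ, (∀ k, 0 ≤ lam k) →
      0 ≤ ∑ j : Fin N, μ j *
        ∑ I ∈ (Finset.univ.erase j).powersetCard (i - 1), ∏ l ∈ I, lam l) ↔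
    (∀ J : Finset (Fin N), J.card = N - i + 1 → 0 ≤ ∑ j ∈ J, μ j) := by
  have key : ∀ lam : Fin N → ℝ, ∑ j : Fin N, μ j *
        ∑ I ∈ (Finset.univ.erase j).powersetCard (i - 1), ∏ l ∈ I, lam l =
      ∑ I ∈ (Finset.univ : Finset (Fin N)).powersetCard (i - 1),
        (∏ l ∈ I, lam l) * ∑ j ∈ Iᶜ, μ j := by
    intro lam
    simp_rw [Finset.mul_sum]
    rw [Finset.sum_comm' (t' := (Finset.univ : Finset (Fin N)).powersetCard (i - 1))
      (s' := fun I => Iᶜ)]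
    · refine Finset.sum_congr rfl fun I _ => Finset.sum_congr rfl fun j _ => mul_comm _ _
    · intro j I
      simp only [Finset.mem_univ, true_and, Finset.mem_powersetCard, Finset.subset_univ,
        Finset.mem_compl, Finset.subset_erase]
  constructor
  · intro h J hJ
    have h1 := h (fun k => if k ∈ J then 0 else 1) (by intro k; split_ifs <;> norm_num)
    have hJc : Jᶜ.card = i - 1 := by
      rw [Finset.card_compl, Fintype.card_fin]; omega
    rw [key, Finset.sum_eq_single Jᶜ] at h1
    · rw [compl_compl, Finset.prod_eq_one, one_mul] at h1
      · exact h1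
      · intro x hx
        simp [Finset.mem_compl.mp hx]
    · intro I hI hne
      have hIc := (Finset.mem_powersetCard.mp hI).2
      have hns : ¬ I ⊆ Jᶜ := fun hs => hne (Finset.eq_of_subset_of_card_le hs (by omega))
      obtain ⟨x, hx, hxJ⟩ := Finset.not_subset.mp hns
      rw [Finset.prod_eq_zero hx, zero_mul]
      simpa using hxJ
    · intro hn
      exact absurd (Finset.mem_powersetCard.mpr ⟨Finset.subset_univ _, hJc⟩) hn
  · intro h lam hl
    rw [key]
    refine Finset.sum_nonneg fun I hI => mul_nonneg (Finset.prod_nonneg fun k _ => hl k) (h _ ?_)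
    have hIc := (Finset.mem_powersetCard.mp hI).2
    rw [Finset.card_compl, Fintype.card_fin]; omega
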